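/- Let M be a graded-free chain complex of R-modules and let (V̄, d̄) := M ⊗_R k be its reduction modulo m. Then there exists an R-linear degree −1 endomorphism ω of the graded R-module V̄ ⊗_k R (a family ωₙ : V̄ₙ ⊗_k R → V̄ₙ₋₁ ⊗_k R) whose image lies in V̄ ⊗_k m, such that (d̄ ⊗ 1 + ω)² = 0 and such that M is isomorphic, as a chain complex of R-modules, to (V̄ ⊗_k R, d̄ ⊗ 1 + ω); moreover the isomorphism can be chosen so that its reduction modulo m is the identity of V̄. -/

import Mathlib

/-!
Let `k` be a field and `R` a commutative local Artinian `k`-algebra with residue field `k`.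
Every graded-free chain complex `M` of `R`-modules is isomorphic, as a chain complex of
`R`-modules, to a twist `(V̄ ⊗_k R, d̄ ⊗ 1 + ω)` of the base change to `R` of its reduction
`V̄ := M ⊗_R k`, where `ω` is an `R`-linear degree `-1` perturbation with image in
`V̄ ⊗_k m`; moreover the isomorphism can be chosen to reduce to the identity of `V̄` mod `m`.
Here `V̄ ⊗_k R` is realised as `R ⊗[k] (k ⊗[R] Mₙ)`.
-/

open TensorProduct

variable (k R : Type) [Field k] [CommRing R] [Algebra k R] [Algebra R k]
  [IsScalarTower k R k] [IsLocalRing R] [IsArtinianRing R]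

section Reduction

variable {k R : Type} [Field k] [CommRing R] [Algebra k R] [Algebra R k]
  {M : Type} [AddCommGroup M] [Module R M] {N : Type} [AddCommGroup N] [Module R N]

/-- An `R`-linear map `f : R ⊗ V̄ → M`, where `V̄ = k ⊗ M`, whose reduction is the identity on the
elements `1 ⊗ v`, reduces to the canonical projection `R ⊗ V̄ → V̄`. -/
theorem one_tmul_apply_tmul_of_reduction_eq (f : (R ⊗[k] (k ⊗[R] M)) →ₗ[R] M)
    (hf : ∀ v : k ⊗[R] M, (1 : k) ⊗ₜ[R] f ((1 : R) ⊗ₜ[k] v) = v) (r : R) (v : k ⊗[R] M) :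
    (1 : k) ⊗ₜ[R] f (r ⊗ₜ[k] v) = algebraMap R k r • v := by
  have hr : r ⊗ₜ[k] v = r • ((1 : R) ⊗ₜ[k] v) := by rw [smul_tmul', smul_eq_mul, mul_one]
  conv_rhs => rw [← hf v]
  rw [hr, map_smul, ← smul_tmul, smul_tmul', Algebra.smul_def, smul_eq_mul]

/-- A free module is isomorphic to the base change of its reduction, by an isomorphism
reducing to the identity. -/
theorem exists_linearEquiv_baseChange_reduction [IsScalarTower k R k] (M : Type)
    [AddCommGroup M] [Module R M] [Module.Free R M] :
    ∃ e : (R ⊗[k] (k ⊗[R] M)) ≃ₗ[R] M,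
      ∀ v : k ⊗[R] M, (1 : k) ⊗ₜ[R] e ((1 : R) ⊗ₜ[k] v) = v := by
  let b := Module.Free.chooseBasis R M
  let c := b.baseChange k
  let e := (c.baseChange R).equiv b (Equiv.refl _)
  have he : ∀ i, e ((1 : R) ⊗ₜ[k] c i) = b i := fun i => by
    simpa only [Module.Basis.baseChange_apply, Equiv.refl_apply] using
      (c.baseChange R).equiv_apply (b' := b) (e := Equiv.refl _) (i := i)
  refine ⟨e, fun v => ?_⟩
  induction c.mem_span v using Submodule.span_induction with
  | zero => simp
  | add x y _ _ hx hy => rw [tmul_add, map_add, tmul_add, hx, hy]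
  | mem x hx =>
    obtain ⟨i, rfl⟩ := hx
    exact (congrArg (fun m => (1 : k) ⊗ₜ[R] m) (he i)).trans (b.baseChange_apply k i).symm
  | smul a x _ hx =>
    have ha : (1 : R) ⊗ₜ[k] (a • x) = algebraMap k R a • ((1 : R) ⊗ₜ[k] x) := by
      rw [algebraMap_smul, tmul_smul]
    conv_rhs => rw [← hx]
    rw [ha, map_smul, ← smul_tmul, algebraMap_smul, smul_tmul']

/-- An element of `R ⊗ V̄` is congruent, modulo the kernel of `R → k`, to its reduction. -/
theorem sub_one_tmul_mem_ker_smul_top [IsScalarTower k R k] (f : (R ⊗[k] (k ⊗[R] M)) →ₗ[R] M)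
    (hf : ∀ v : k ⊗[R] M, (1 : k) ⊗ₜ[R] f ((1 : R) ⊗ₜ[k] v) = v) (x : R ⊗[k] (k ⊗[R] M)) :
    x - (1 : R) ⊗ₜ[k] ((1 : k) ⊗ₜ[R] f x) ∈
      RingHom.ker (algebraMap R k) • (⊤ : Submodule R (R ⊗[k] (k ⊗[R] M))) := by
  induction x with
  | zero => simp
  | add x y hx hy =>
    rw [map_add, tmul_add, tmul_add, add_sub_add_comm]
    exact add_mem hx hy
  | tmul r v =>
    have hrv : r ⊗ₜ[k] v - (1 : R) ⊗ₜ[k] (algebraMap R k r • v) =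
        (r - algebraMap k R (algebraMap R k r)) • ((1 : R) ⊗ₜ[k] v) := by
      rw [smul_tmul', smul_eq_mul, mul_one, sub_tmul, ← smul_tmul, ← Algebra.algebraMap_eq_smul_one]
    rw [one_tmul_apply_tmul_of_reduction_eq f hf, hrv]
    refine Submodule.smul_mem_smul ?_ Submodule.mem_top
    rw [RingHom.mem_ker, map_sub, ← IsScalarTower.algebraMap_apply k R k, Algebra.algebraMap_self,
      RingHom.id_apply, sub_self]

/-- The projections `R ⊗ V̄ → V̄` intertwine `d̄ ⊗ 1` with the reduction `d̄` of `d`. -/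
theorem one_tmul_apply_baseChange_baseChange (d : M →ₗ[R] N)
    (f : (R ⊗[k] (k ⊗[R] M)) →ₗ[R] M)
    (hf : ∀ v : k ⊗[R] M, (1 : k) ⊗ₜ[R] f ((1 : R) ⊗ₜ[k] v) = v)
    (g : (R ⊗[k] (k ⊗[R] N)) →ₗ[R] N)
    (hg : ∀ v : k ⊗[R] N, (1 : k) ⊗ₜ[R] g ((1 : R) ⊗ₜ[k] v) = v) (x : R ⊗[k] (k ⊗[R] M)) :
    (1 : k) ⊗ₜ[R] g (LinearMap.baseChange R (LinearMap.baseChange k d) x) =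
      (1 : k) ⊗ₜ[R] d (f x) := by
  induction x with
  | zero => simp
  | add x y hx hy => simp only [map_add, tmul_add, hx, hy]
  | tmul r v =>
    rw [LinearMap.baseChange_tmul, one_tmul_apply_tmul_of_reduction_eq g hg,
      ← LinearMap.baseChange_tmul, one_tmul_apply_tmul_of_reduction_eq f hf, map_smul]

end Reduction

theorem gradedFree_complex_iso_twisted_baseChange_of_reduction
    (hker : RingHom.ker (algebraMap R k) = IsLocalRing.maximalIdeal R)
    (M : ℤ → Type) [∀ n, AddCommGroup (M n)] [∀ n, Module R (M n)]
    (hfree : ∀ n, Module.Free R (M n))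
    (d : ∀ n : ℤ, M n →ₗ[R] M (n - 1))
    (hd : ∀ n : ℤ, (d (n - 1)).comp (d n) = 0) :
    -- `ω` : an `R`-linear degree `-1` family on `V̄ ⊗_k R = R ⊗[k] (k ⊗[R] Mₙ)` ...
    ∃ ω : ∀ n : ℤ, (R ⊗[k] (k ⊗[R] M n)) →ₗ[R] (R ⊗[k] (k ⊗[R] M (n - 1))),
      -- ... with image in `V̄ ⊗_k m` ...
      (∀ (n : ℤ) (x : R ⊗[k] (k ⊗[R] M n)),
        ω n x ∈ (IsLocalRing.maximalIdeal R) •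
          (⊤ : Submodule R (R ⊗[k] (k ⊗[R] M (n - 1))))) ∧
      -- ... such that `(d̄ ⊗ 1 + ω)² = 0` ...
      (∀ n : ℤ,
        ((LinearMap.baseChange R (LinearMap.baseChange k (d (n - 1))) + ω (n - 1)).comp
          (LinearMap.baseChange R (LinearMap.baseChange k (d n)) + ω n)) = 0) ∧
      -- ... and `M ≅ (V̄ ⊗_k R, d̄ ⊗ 1 + ω)` as chain complexes of `R`-modules, the
      -- isomorphism reducing to the identity of `V̄` modulo `m`.
      ∃ e : ∀ n : ℤ, (R ⊗[k] (k ⊗[R] M n)) ≃ₗ[R] M n,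
        (∀ (n : ℤ) (x : R ⊗[k] (k ⊗[R] M n)),
          e (n - 1) ((LinearMap.baseChange R (LinearMap.baseChange k (d n)) + ω n) x)
            = d n (e n x)) ∧
        (∀ (n : ℤ) (v : k ⊗[R] M n),
          LinearMap.baseChange k ((e n : (R ⊗[k] (k ⊗[R] M n)) →ₗ[R] M n))
            ((1 : k) ⊗ₜ[R] ((1 : R) ⊗ₜ[k] v)) = v) := by
  choose e he using fun n =>
    haveI := hfree n
    exists_linearEquiv_baseChange_reduction (k := k) (R := R) (M n)
  let δ := fun n => LinearMap.baseChange R (LinearMap.baseChange k (d n))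
  let D := fun n => (e (n - 1)).symm.toLinearMap ∘ₗ d n ∘ₗ (e n).toLinearMap
  have hD : ∀ n, δ n + (D n - δ n) = D n := fun n => LinearMap.ext fun x =>
    add_sub_cancel (δ n x) (D n x)
  refine ⟨fun n => D n - δ n, fun n x => ?_, fun n => ?_, e, fun n x => ?_, fun n v => ?_⟩
  · have hx := sub_one_tmul_mem_ker_smul_top (e (n - 1)).toLinearMap (he (n - 1)) ((D n - δ n) x)
    have hred : (1 : k) ⊗ₜ[R] (e (n - 1)).toLinearMap ((D n - δ n) x) = 0 := by
      rw [LinearMap.sub_apply, map_sub, tmul_sub,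
        one_tmul_apply_baseChange_baseChange (d n) (e n).toLinearMap (he n) _ (he (n - 1))]
      simp [D]
    rwa [hred, tmul_zero, sub_zero, hker] at hx
  · refine (congrArg₂ LinearMap.comp (hD (n - 1)) (hD n)).trans (LinearMap.ext fun x => ?_)
    have hdd : d (n - 1) (d n (e n x)) = 0 := LinearMap.congr_fun (hd n) (e n x)
    simp [D, hdd]
  · refine (congrArg (e (n - 1)) (LinearMap.congr_fun (hD n) x)).trans ?_
    simp [D]
  · exact he n v
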